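/- arXiv:2510.05786 — 2 statements merged into one kernel-verified Lean document; each statement's English description precedes it below -/
import Mathlib

section
/- Let G = (V,E) be a DAMG, R a commutative ring, and q : E → R a normalized weight function with total path weight function s. Let X ⊆ V be a subset and y ∈ V an element such that every directed path in G from a root of G to y contains exactly one element of X. Then Σ_{x ∈ X} s(x|y) = 1. In particular, Σ_{r ∈ Rt(G)} s(r|y) = 1 for every y ∈ V. -/
open scoped Classical

/-- A directed multigraph: finite sets of vertices/edges with tail and head maps. -/
structure MGraph (V E : Type*) where
  tl : E → V
  hd : E → V

namespace MGraph

variable {V E R A : Type*}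

/-- `G` is a directed acyclic multigraph (DAMG) if it admits a topological ordering,
i.e. a linear (injective) order on the vertices such that tails precede heads. -/
def IsDAMG (G : MGraph V E) : Prop :=
  ∃ ord : V → ℕ, Function.Injective ord ∧ ∀ e : E, ord (G.tl e) < ord (G.hd e)

/-- `G.IsPath x y l` : the list of edges `l` is a directed path from `x` to `y`. -/
def IsPath (G : MGraph V E) : V → V → List E → Prop
  | x, y, [] => x = y
  | x, y, e :: es => G.tl e = x ∧ G.IsPath (G.hd e) y es

/-- the set `E(x,y)` of edges from `x` to `y` -/
def edges (G : MGraph V E) (x y : V) : Set E := {e | G.tl e = x ∧ G.hd e = y}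

/-- there is a directed path from `x` to `y` (possibly trivial) -/
def Reaches (G : MGraph V E) (x y : V) : Prop := ∃ l : List E, G.IsPath x y l

/-- ancestors of `y` (including `y`) -/
def anc (G : MGraph V E) (y : V) : Set V := {x | G.Reaches x y}

/-- descendants of `x` (including `x`) -/
def desc (G : MGraph V E) (x : V) : Set V := {y | G.Reaches x y}

/-- parents of `y` -/
def pa (G : MGraph V E) (y : V) : Set V := {x | ∃ e : E, G.tl e = x ∧ G.hd e = y}

/-- roots (sources) of `G` -/
def roots (G : MGraph V E) : Set V := {x | G.pa x = ∅}

/-- leaves (sinks) of `G` -/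
def leaves (G : MGraph V E) : Set V := {x | ∀ e : E, G.tl e ≠ x}

/-- `π(x,y)` : the number of directed paths from `x` to `y` -/
noncomputable def nPaths (G : MGraph V E) (x y : V) : ℕ :=
  {l : List E | G.IsPath x y l}.ncard

/-- `π(y)` : the number of directed paths from roots to `y` -/
noncomputable def nPathsRt (G : MGraph V E) (y : V) : ℕ :=
  ∑ᶠ r ∈ G.roots, G.nPaths r y

/-- pairwise weight `q(x|y) := Σ_{e ∈ E(x,y)} q(e)` -/
noncomputable def pw [AddCommMonoid R] (G : MGraph V E) (q : E → R) (x y : V) : R :=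
  ∑ᶠ e ∈ G.edges x y, q e

/-- a weight function is normalized if pairwise weights into any non-root sum to 1 -/
def Normalized [CommRing R] (G : MGraph V E) (q : E → R) : Prop :=
  ∀ y : V, y ∉ G.roots → (∑ᶠ x : V, G.pw q x y) = 1

/-- `w` is the Möbius transform (synergy function) of `v` w.r.t. `G` -/
def IsMoebiusTransform [AddCommGroup A] (G : MGraph V E) (v w : V → A) : Prop :=
  ∀ x : V, w x = v x - ∑ᶠ y ∈ G.anc x \ {x}, w y

/-- `μ` is the Möbius function of `G` -/
def IsMoebiusFunction (G : MGraph V E) (μ : V → V → ℤ) : Prop :=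
  (∀ x y : V, x ∉ G.anc y → μ x y = 0) ∧
  (∀ x : V, μ x x = 1) ∧
  (∀ x y : V, x ∈ G.anc y → x ≠ y →
    μ x y = -(∑ᶠ z ∈ (G.desc x ∩ G.anc y) \ {y}, μ x z))

/-- `s` is the total path weight function of the edge weight function `q` -/
def IsTotalWeight [CommRing R] (G : MGraph V E) (q : E → R) (s : V → V → R) : Prop :=
  (∀ x y : V, y ∉ G.desc x → s x y = 0) ∧
  (∀ x : V, s x x = 1) ∧
  (∀ x y : V, y ∈ G.desc x → y ≠ x → s x y = ∑ᶠ z ∈ G.pa y, s x z * G.pw q z y)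

/-- `τ : V → R` is the extension of a root weight function via the recursion
`τ(y) = Σ_{z ∈ Pa(y)} τ(z)·ς(z,y)` for non-roots `y` -/
def IsRootExtension [CommRing R] (G : MGraph V E) (ς : E → R) (τ : V → R) : Prop :=
  ∀ y : V, y ∉ G.roots → τ y = ∑ᶠ z ∈ G.pa y, τ z * G.pw ς z y

/-- the list of vertices visited by a path starting at `x` -/
def pathVerts (G : MGraph V E) (x : V) (l : List E) : List V := x :: l.map G.hd

/-- `X` is a horizontal subset of `G` : every directed path from a root to a leaf
contains exactly one element of `X` -/
def Horizontal (G : MGraph V E) (X : Set V) : Prop :=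
  ∀ r ∈ G.roots, ∀ lf ∈ G.leaves, ∀ p : List E, G.IsPath r lf p →
    (G.pathVerts r p).countP (fun v => decide (v ∈ X)) = 1

/-- the path uniform weight function `q_G(e) := π(t(e))/π(h(e))` -/
noncomputable def pathUniform (G : MGraph V E) : E → ℚ :=
  fun e => (G.nPathsRt (G.tl e) : ℚ) / (G.nPathsRt (G.hd e) : ℚ)

/-- the unanimity value function centred at `y` -/
noncomputable def zeta [CommRing R] (G : MGraph V E) (y : V) : V → R :=
  fun x => if x ∈ G.desc y then (1 : R) else 0

/-! ### Projection onto the complement of a single element -/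

/-- the edge type of the projection `G^{∖z}` :
old edges avoiding `z`, together with a new edge for every pair of edges through `z` -/
def proj1E (G : MGraph V E) (z : V) : Type _ :=
  {e : E // G.tl e ≠ z ∧ G.hd e ≠ z} ⊕
  {p : E × E // G.hd p.1 = z ∧ G.tl p.2 = z ∧ G.tl p.1 ≠ z ∧ G.hd p.2 ≠ z}

/-- the projection `G^{∖z}` of `G` onto the complement of `z` -/
def proj1 (G : MGraph V E) (z : V) : MGraph {x : V // x ≠ z} (G.proj1E z) where
  tl := Sum.elim (fun e => ⟨G.tl e.1, e.2.1⟩) (fun p => ⟨G.tl p.1.1, p.2.2.2.1⟩)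
  hd := Sum.elim (fun e => ⟨G.hd e.1, e.2.2⟩) (fun p => ⟨G.hd p.1.2, p.2.2.2.2⟩)

/-- the projected weight function `q^{∖z}` -/
def proj1Q [CommRing R] (G : MGraph V E) (z : V) (q : E → R) : G.proj1E z → R :=
  Sum.elim (fun e => q e.1) (fun p => q p.1.1 * q p.1.2)

/-- the single-element projection `w^{∖z}(x) := w(x) + q(x|z)·w(z)` of a synergy function -/
noncomputable def wProjOne [CommRing R] [AddCommGroup A] [Module R A]
    (G : MGraph V E) (q : E → R) (w : V → A) (z : V) : {x : V // x ≠ z} → A :=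
  fun x => w x.1 + G.pw q x.1 z • w z

/-! ### Projection onto the complement of a subset -/

/-- consecutive edges of the list compose -/
def IsChain (G : MGraph V E) : List E → Prop
  | [] => True
  | [_] => True
  | e :: e' :: es => G.hd e = G.tl e' ∧ G.IsChain (e' :: es)

/-- the interior vertices of a path (all visited vertices except the endpoints) -/
def interior (G : MGraph V E) : List E → List V
  | [] => []
  | [_] => []
  | e :: e' :: es => G.hd e :: G.interior (e' :: es)

/-- an edge of the projection `G^{∖S}` : a nonempty directed path of `G` whose
interior vertices lie in `S` and whose endpoints lie outside `S`
(iterating `E^{∖z}(x,y) := E(x,y) ⊔ (E(x,z) × E(z,y))` over the elements of `S`) -/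
structure ProjEdge (G : MGraph V E) (S : Set V) where
  first : E
  rest : List E
  chain : G.IsChain (first :: rest)
  tl_notin : G.tl first ∉ S
  hd_notin : G.hd ((first :: rest).getLast (List.cons_ne_nil _ _)) ∉ S
  interior_mem : ∀ v ∈ G.interior (first :: rest), v ∈ S

/-- the projection `G^{∖S}` of `G` onto the complement of the subset `S` -/
def projG (G : MGraph V E) (S : Set V) : MGraph {x : V // x ∉ S} (G.ProjEdge S) where
  tl := fun p => ⟨G.tl p.first, p.tl_notin⟩
  hd := fun p => ⟨G.hd ((p.first :: p.rest).getLast (List.cons_ne_nil _ _)), p.hd_notin⟩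

/-- the projected weight function `q^{∖S}` (weights multiply along collapsed paths) -/
def projQ [CommRing R] (G : MGraph V E) (S : Set V) (q : E → R) :
    G.ProjEdge S → R :=
  fun p => ((p.first :: p.rest).map q).prod

/-! ### Iterated one-element projections of pairwise weights and synergy functions -/

/-- one projection step on pairwise weights: `q^{∖z}(x|y) = q(x|y) + q(x|z)·q(z|y)` -/
def pwStep [CommRing R] (Q : V → V → R) (z : V) : V → V → R :=
  fun x y => Q x y + Q x z * Q z y

/-- one projection step on a synergy function: `w^{∖z}(x) = w(x) + q(x|z)·w(z)` -/
def wStep [CommRing R] [AddCommGroup A] [Module R A]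
    (Q : V → V → R) (w : V → A) (z : V) : V → A :=
  fun x => w x + Q x z • w z

/-- iterated one-element projections along a list of vertices -/
def projIter [CommRing R] [AddCommGroup A] [Module R A] :
    List V → (V → V → R) → (V → A) → ((V → V → R) × (V → A))
  | [], Q, w => (Q, w)
  | z :: zs, Q, w => projIter zs (pwStep Q z) (wStep Q w z)

/-! ### Subgraph on a subset of vertices -/

/-- edges of `G` with both endpoints in `S` -/
def subE (G : MGraph V E) (S : Set V) : Type _ := {e : E // G.tl e ∈ S ∧ G.hd e ∈ S}

/-- the subgraph of `G` on the vertex subset `S` -/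
def subgraph (G : MGraph V E) (S : Set V) : MGraph ↥S (G.subE S) where
  tl := fun e => ⟨G.tl e.1, e.2.1⟩
  hd := fun e => ⟨G.hd e.1, e.2.2⟩

/-- the canonical identification `(V∖{z})∖{u} ≃ (V∖{u})∖{z}` -/
def swapCompl (z u : V) (hzu : z ≠ u) :
    {y : {x : V // x ≠ z} // y ≠ ⟨u, Ne.symm hzu⟩} ≃
      {y : {x : V // x ≠ u} // y ≠ ⟨z, hzu⟩} where
  toFun y := ⟨⟨y.1.1, fun h => y.2 (Subtype.ext h)⟩, fun h => y.1.2 (congrArg Subtype.val h)⟩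
  invFun y := ⟨⟨y.1.1, fun h => y.2 (Subtype.ext h)⟩, fun h => y.1.2 (congrArg Subtype.val h)⟩
  left_inv y := rfl
  right_inv y := rfl

end MGraph

namespace MGraph

theorem isPath_append {V E : Type*} (G : MGraph V E) {y z : V} {l₂ : List E} (h₂ : G.IsPath y z l₂) :
    ∀ (l₁ : List E) (x : V), G.IsPath x y l₁ → G.IsPath x z (l₁ ++ l₂)
  | [], x, h => by
    have h' : x = y := h
    subst h'
    exact h₂
  | e :: es, x, h => ⟨h.1, isPath_append G h₂ es (G.hd e) h.2⟩

/-- a path which ends away from its start visits its end as the head of an edge -/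
theorem end_mem {V E : Type*} (G : MGraph V E) {y : V} :
    ∀ (l : List E) (x : V), G.IsPath x y l → x ≠ y → y ∈ l.map G.hd
  | [], x, h, hne => absurd h hne
  | e :: es, x, h, _ => by
    by_cases hy : G.hd e = y
    · simp [hy]
    · have := end_mem G es (G.hd e) h.2 hy
      rw [List.map_cons]
      exact List.mem_cons_of_mem _ this

theorem end_mem_pathVerts {V E : Type*} (G : MGraph V E) {x y : V} {l : List E}
    (h : G.IsPath x y l) : y ∈ G.pathVerts x l := by
  by_cases hxy : x = y
  · simp [pathVerts, hxy]
  · exact List.mem_cons_of_mem _ (end_mem G l x h hxy)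

theorem exists_root {V E : Type*} (G : MGraph V E) (hG : G.IsDAMG) (x : V) :
    ∃ r ∈ G.roots, ∃ l, G.IsPath r x l := by
  obtain ⟨ord, -, ho⟩ := hG
  induction hn : ord x using Nat.strong_induction_on generalizing x with
  | _ n ih =>
    by_cases hx : x ∈ G.roots
    · exact ⟨x, hx, [], rfl⟩
    · obtain ⟨z, e, hz, he⟩ := Set.nonempty_iff_ne_empty.mpr hx
      have hlt : ord z < n := by
        rw [← hn, ← hz, ← he]
        exact ho e
      obtain ⟨r, hr, l, hl⟩ := ih _ hlt z rfl
      exact ⟨r, hr, l ++ [e], isPath_append G (show G.IsPath z x [e] from ⟨hz, he⟩) l r hl⟩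

theorem finsum_mem_eq_ite {V R : Type*} [Fintype V] [AddCommMonoid R] (X : Set V) (f : V → R) :
    (∑ᶠ x ∈ X, f x) = ∑ x, if x ∈ X then f x else 0 := by
  rw [finsum_mem_def, finsum_eq_sum_of_fintype]
  rfl

theorem sum_eq_one {V E R : Type*} [Finite V] [CommRing R]
    (G : MGraph V E) (hG : G.IsDAMG)
    (q : E → R) (hq : G.Normalized q)
    (s : V → V → R) (hs : G.IsTotalWeight q s)
    (X : Set V) (y : V)
    (hXy : ∀ r ∈ G.roots, ∀ p : List E, G.IsPath r y p →
      (G.pathVerts r p).countP (fun v => decide (v ∈ X)) = 1) :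
    (∑ᶠ x ∈ X, s x y) = 1 := by
  have hG' := hG
  obtain ⟨ord, -, ho⟩ := hG
  obtain ⟨hs0, hs1, hs2⟩ := hs
  have := Fintype.ofFinite V
  induction hn : ord y using Nat.strong_induction_on generalizing y with
  | _ n ih =>
    by_cases hy : y ∈ X
    · rw [finsum_mem_eq_ite, Finset.sum_eq_single y]
      · simp [hy, hs1]
      · intro x _ hxy
        split_ifs with hx
        · apply hs0
          rintro ⟨l, hl⟩
          obtain ⟨r, hr, l', hl'⟩ := exists_root G hG' x
          have h1 := hXy r hr (l' ++ l) (isPath_append G hl l' r hl')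
          have e1 : G.pathVerts r (l' ++ l) = G.pathVerts r l' ++ l.map G.hd := by
            simp [pathVerts]
          rw [e1, List.countP_append] at h1
          have a1 : 0 < (G.pathVerts r l').countP (fun v => decide (v ∈ X)) :=
            List.countP_pos_iff.mpr ⟨x, end_mem_pathVerts G hl', by simpa using hx⟩
          have a2 : 0 < (l.map G.hd).countP (fun v => decide (v ∈ X)) :=
            List.countP_pos_iff.mpr ⟨y, end_mem G l x hl hxy, by simpa using hy⟩
          omega
        · rfl
      · simp
    · have hroot : y ∉ G.roots := by
        intro hr
        have := hXy y hr [] rfl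
        simp [pathVerts, hy] at this
      have hpa : ∀ z ∈ G.pa y, (∑ᶠ x ∈ X, s x z) = 1 := by
        rintro z ⟨e, hz, he⟩
        have hlt : ord z < n := by
          rw [← hn, ← hz, ← he]
          exact ho e
        refine ih _ hlt z ?_ rfl
        intro r hr p hp
        have h1 := hXy r hr (p ++ [e])
          (isPath_append G (show G.IsPath z y [e] from ⟨hz, he⟩) p r hp)
        have e1 : G.pathVerts r (p ++ [e]) = G.pathVerts r p ++ [y] := by
          simp [pathVerts, he]
        rw [e1, List.countP_append] at h1
        simpa [hy] using h1
      have hrec : ∀ x ∈ X, s x y = ∑ᶠ z ∈ G.pa y, s x z * G.pw q z y := by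
        intro x hx
        by_cases hd : y ∈ G.desc x
        · exact hs2 x y hd (fun h => hy (h ▸ hx))
        · rw [hs0 x y hd]
          symm
          apply finsum_mem_eq_zero_of_forall_eq_zero
          rintro z ⟨e, hz, he⟩
          rw [hs0 x z, zero_mul]
          rintro ⟨l, hl⟩
          exact hd ⟨l ++ [e], isPath_append G (show G.IsPath z y [e] from ⟨hz, he⟩) l x hl⟩
      rw [finsum_mem_congr rfl hrec, finsum_mem_comm _ X.toFinite (G.pa y).toFinite]
      have h3 : ∀ z ∈ G.pa y, (∑ᶠ x ∈ X, s x z * G.pw q z y) = G.pw q z y := by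
        intro z hz
        have h4 := hpa z hz
        rw [finsum_mem_eq_ite] at h4 ⊢
        calc _ = (∑ x, if x ∈ X then s x z else 0) * G.pw q z y := by
              simp [Finset.sum_mul, ite_mul]
          _ = _ := by rw [h4, one_mul]
      rw [finsum_mem_congr rfl h3, ← hq y hroot, finsum_mem_eq_ite, finsum_eq_sum_of_fintype]
      refine Finset.sum_congr rfl fun z _ => ?_
      split_ifs with hz
      · rfl
      · symm
        apply finsum_mem_eq_zero_of_forall_eq_zero
        intro e he
        exact absurd ⟨e, he⟩ hz

end MGraph

/-- **Normalization of total path weights.**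
Let `q` be a normalized weight function on the DAMG `G` with total path weight
function `s`. If every directed path from a root of `G` to `y` contains exactly
one element of `X`, then `Σ_{x ∈ X} s(x|y) = 1`; in particular
`Σ_{r ∈ Rt(G)} s(r|y') = 1` for every `y' ∈ V`. -/
theorem total_path_weights_normalized
    {V E R : Type*} [Finite V] [Finite E] [CommRing R]
    (G : MGraph V E) (hG : G.IsDAMG)
    (q : E → R) (hq : G.Normalized q)
    (s : V → V → R) (hs : G.IsTotalWeight q s)
    (X : Set V) (y : V)
    (hXy : ∀ r ∈ G.roots, ∀ p : List E, G.IsPath r y p →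
      (G.pathVerts r p).countP (fun v => decide (v ∈ X)) = 1) :
    (∑ᶠ x ∈ X, s x y) = 1 ∧ (∀ y' : V, (∑ᶠ r ∈ G.roots, s r y') = 1) := by
  refine ⟨MGraph.sum_eq_one G hG q hq s hs X y hXy, fun y' =>
    MGraph.sum_eq_one G hG q hq s hs G.roots y' ?_⟩
  intro r hr p _
  have h0 : (p.map G.hd).countP (fun v => decide (v ∈ G.roots)) = 0 := by
    rw [List.countP_eq_zero]
    intro v hv
    obtain ⟨e, -, he⟩ := List.mem_map.mp hv
    intro hv'
    have hv2 : G.pa v = ∅ := of_decide_eq_true hv'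
    have : G.tl e ∈ G.pa v := ⟨e, rfl, he⟩
    rw [hv2] at this
    exact this
  rw [MGraph.pathVerts, List.countP_cons, h0]
  simp [hr]
end

section
/- Let G = (V,E) be a DAMG, R a commutative ring, q : E → R a normalized weight function with total path weight function s, and z ∈ V. Let s^{∖z} be the total path weight function of the projected weighted DAMG (G^{∖z}, q^{∖z}). Then s^{∖z}(x|y) = s(x|y) for all x, y ∈ V∖{z}. -/
open scoped Classical

namespace MGraph

variable {V E R : Type*}

lemma aux_sum_subtype [Fintype E] [CommRing R] (p : E → Prop) [Fintype {e // p e}] (f : E → R)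
    (hf : ∀ e, ¬ p e → f e = 0) : ∑ a : {e // p e}, f a.1 = ∑ e, f e := by
  rw [← Finset.sum_subtype (Finset.univ.filter p) (by simp) f]
  apply Finset.sum_filter_of_ne
  intro e _ h
  by_contra hp
  exact h (hf e hp)

lemma pw_eq_sum [Fintype E] [CommRing R] (G : MGraph V E) (q : E → R) (x y : V) :
    G.pw q x y = ∑ e, if G.tl e = x ∧ G.hd e = y then q e else 0 := by
  unfold pw
  rw [finsum_mem_def, finsum_eq_sum_of_fintype]
  apply Finset.sum_congr rfl
  intro e _
  simp [Set.indicator_apply, edges]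

lemma pw_eq_zero [Finite E] [CommRing R] (G : MGraph V E) (q : E → R) (x y : V)
    (h : x ∉ G.pa y) : G.pw q x y = 0 := by
  cases nonempty_fintype E
  rw [pw_eq_sum]
  apply Finset.sum_eq_zero
  intro e _
  rw [if_neg]
  rintro ⟨h1, h2⟩
  exact h ⟨e, h1, h2⟩

lemma IsPath.snoc (G : MGraph V E) (e : E) : ∀ (l : List E) (x : V), G.IsPath x (G.tl e) l →
    G.IsPath x (G.hd e) (l ++ [e])
  | [], x, h => by
    have h' : x = G.tl e := h
    exact ⟨h'.symm, rfl⟩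
  | a :: l, x, h => ⟨h.1, IsPath.snoc G e l _ h.2⟩

lemma desc_of_pa (G : MGraph V E) {x u y : V} (hu : u ∈ G.pa y) (h : u ∈ G.desc x) :
    y ∈ G.desc x := by
  obtain ⟨e, rfl, rfl⟩ := hu
  obtain ⟨l, hl⟩ := h
  exact ⟨_, IsPath.snoc G e l x hl⟩

lemma ord_le (G : MGraph V E) (ord : V → ℕ) (ho : ∀ e : E, ord (G.tl e) < ord (G.hd e)) :
    ∀ (l : List E) (x y : V), G.IsPath x y l → ord x ≤ ord y
  | [], x, y, h => by
    have h' : x = y := h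
    rw [h']
  | a :: l, x, y, h => by
    have h1 := ord_le G ord ho l _ _ h.2
    have h2 := ho a
    rw [h.1] at h2
    omega

lemma total_rec [Fintype V] [Finite E] [CommRing R] (G : MGraph V E) (hG : G.IsDAMG)
    (q : E → R) (s : V → V → R) (hs : G.IsTotalWeight q s) (x y : V) :
    s x y = (if x = y then 1 else 0) + ∑ u, s x u * G.pw q u y := by
  obtain ⟨ord, -, ho⟩ := hG
  obtain ⟨h0, h1, h2⟩ := hs
  by_cases hxy : x = y
  · subst hxy
    rw [h1, if_pos rfl, Finset.sum_eq_zero, add_zero]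
    intro u _
    by_cases hu : u ∈ G.pa x
    · rw [h0 x u, zero_mul]
      rintro ⟨l, hl⟩
      have := ord_le G ord ho l _ _ hl
      obtain ⟨e, rfl, rfl⟩ := hu
      have := ho e
      omega
    · rw [pw_eq_zero G q u x hu, mul_zero]
  · rw [if_neg hxy, zero_add]
    by_cases hd : y ∈ G.desc x
    · rw [h2 x y hd (Ne.symm hxy), finsum_mem_def, finsum_eq_sum_of_fintype]
      apply Finset.sum_congr rfl
      intro u _
      by_cases hu : u ∈ G.pa y
      · simp [hu]
      · simp [hu, pw_eq_zero G q u y hu]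
    · rw [h0 x y hd, Finset.sum_eq_zero]
      intro u _
      by_cases hu : u ∈ G.pa y
      · rw [h0 x u (fun h => hd (desc_of_pa G hu h)), zero_mul]
      · rw [pw_eq_zero G q u y hu, mul_zero]

lemma rec_unique [Fintype V] [Finite E] [CommRing R] (G : MGraph V E) (hG : G.IsDAMG)
    (q : E → R) (c f g : V → R) (hf : ∀ y, f y = c y + ∑ u, f u * G.pw q u y)
    (hg : ∀ y, g y = c y + ∑ u, g u * G.pw q u y) (y : V) : f y = g y := by
  obtain ⟨ord, -, ho⟩ := hG
  induction hn : ord y using Nat.strong_induction_on generalizing y with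
  | _ n ih =>
    rw [hf, hg]
    congr 1
    apply Finset.sum_congr rfl
    intro u _
    by_cases hu : u ∈ G.pa y
    · rw [ih (ord u) _ u rfl]
      obtain ⟨e, rfl, rfl⟩ := hu
      rw [← hn]
      exact ho e
    · rw [pw_eq_zero G q u y hu, mul_zero, mul_zero]

lemma pw_self [Finite E] [CommRing R] (G : MGraph V E) (hG : G.IsDAMG) (q : E → R) (z : V) :
    G.pw q z z = 0 := by
  obtain ⟨ord, -, ho⟩ := hG
  apply pw_eq_zero
  rintro ⟨e, h1, h2⟩
  have := ho e
  rw [h1, h2] at this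
  omega

lemma proj1_isDAMG (G : MGraph V E) (hG : G.IsDAMG) (z : V) : (G.proj1 z).IsDAMG := by
  obtain ⟨ord, hi, ho⟩ := hG
  refine ⟨fun x => ord x.1, fun a b h => Subtype.ext (hi h), ?_⟩
  rintro (e | p)
  · exact ho e.1
  · have h1 := ho p.1.1
    have h2 := ho p.1.2
    rw [p.2.1] at h1
    rw [p.2.2.1] at h2
    exact h1.trans h2

lemma proj1_finite [Finite E] (G : MGraph V E) (z : V) : Finite (G.proj1E z) := by
  unfold proj1E
  infer_instance

lemma proj1_pw [Finite E] [CommRing R] (G : MGraph V E) (q : E → R) (z : V)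
    (x y : {x : V // x ≠ z}) :
    (G.proj1 z).pw (G.proj1Q z q) x y = G.pw q x.1 y.1 + G.pw q x.1 z * G.pw q z y.1 := by
  cases nonempty_fintype E
  let : Fintype (G.proj1E z) := (inferInstance : Fintype
    ({e : E // G.tl e ≠ z ∧ G.hd e ≠ z} ⊕
    {p : E × E // G.hd p.1 = z ∧ G.tl p.2 = z ∧ G.tl p.1 ≠ z ∧ G.hd p.2 ≠ z}))
  rw [pw_eq_sum, pw_eq_sum, pw_eq_sum, pw_eq_sum, Finset.sum_mul_sum, ← Finset.sum_product',
    Finset.univ_product_univ]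
  refine (Fintype.sum_sum_type _).trans ?_
  congr 1
  · rw [← aux_sum_subtype (fun e : E => G.tl e ≠ z ∧ G.hd e ≠ z)]
    · apply Finset.sum_congr rfl
      intro e _
      simp [proj1, proj1Q, Subtype.ext_iff]
    · intro e he
      rw [if_neg]
      rintro ⟨h1, h2⟩
      exact he ⟨h1 ▸ x.2, h2 ▸ y.2⟩
  · rw [← aux_sum_subtype (fun p : E × E =>
      G.hd p.1 = z ∧ G.tl p.2 = z ∧ G.tl p.1 ≠ z ∧ G.hd p.2 ≠ z)]
    · apply Finset.sum_congr rfl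
      rintro ⟨p, h1, h2, h3, h4⟩ _
      simp only [proj1, proj1Q, Subtype.ext_iff, Sum.elim_inr, h1, h2, true_and, and_true]
      by_cases h5 : G.tl p.1 = x.1 <;> by_cases h6 : G.hd p.2 = y.1 <;> simp [h5, h6]
    · intro p hp
      by_cases h5 : G.tl p.1 = x.1 ∧ G.hd p.1 = z
      · rw [if_neg (c := G.tl p.2 = z ∧ _), mul_zero]
        rintro ⟨h1, h2⟩
        exact hp ⟨h5.2, h1, h5.1 ▸ x.2, h2 ▸ y.2⟩
      · rw [if_neg h5, zero_mul]

end MGraph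

/-- **Total path weight functions are stable under projection.**
If `q` is a normalized weight function on the DAMG `G` with total path weight
function `s`, and `s'` is the total path weight function of the projected
weighted DAMG `(G^{∖z}, q^{∖z})`, then `s'(x|y) = s(x|y)` for all `x, y ∈ V∖{z}`. -/
theorem proj1_total_weights
    {V E R : Type*} [Finite V] [Finite E] [CommRing R]
    (G : MGraph V E) (hG : G.IsDAMG)
    (q : E → R) (hq : G.Normalized q)
    (s : V → V → R) (hs : G.IsTotalWeight q s)
    (z : V) (s' : {x : V // x ≠ z} → {x : V // x ≠ z} → R)
    (hs' : (G.proj1 z).IsTotalWeight (G.proj1Q z q) s') :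
    ∀ x y : {x : V // x ≠ z}, s' x y = s x.1 y.1 := by
  intro x
  cases nonempty_fintype V
  haveI := G.proj1_finite z
  refine MGraph.rec_unique (G.proj1 z) (G.proj1_isDAMG hG z) (G.proj1Q z q)
    (fun y => if x = y then 1 else 0) (s' x) (fun y => s x.1 y.1)
    (fun y => by
      convert MGraph.total_rec _ (G.proj1_isDAMG hG z) _ s' hs' x y) ?_
  have split : ∀ f : V → R, ∑ u, f u = f z + ∑ u : {u : V // u ≠ z}, f u.1 := by
    intro f
    rw [← Finset.add_sum_erase _ _ (Finset.mem_univ z),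
      Finset.sum_subtype (Finset.univ.erase z) (p := fun u => u ≠ z) (by simp) f]
  intro y
  have hz := MGraph.total_rec G hG q s hs x.1 z
  rw [if_neg x.2, split, MGraph.pw_self G hG, mul_zero, zero_add, zero_add] at hz
  have hy := MGraph.total_rec G hG q s hs x.1 y.1
  rw [split] at hy
  simp only [MGraph.proj1_pw, mul_add, Finset.sum_add_distrib, ← mul_assoc]
  rw [← Finset.sum_mul, ← hz, hy]
  simp only [Subtype.ext_iff]
  ring
end
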